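/- Assume r ≥ 2, d₁ ≥ 2, μ₁ = d₁ − 1 and μᵢ = 0 for i = 2,…,r. Let (𝓛, X₁,…,X_r, Y₁,…,Y_r) be a solution of the expanding Ricci soliton ODE system on [s₀, ∞) with 𝓛(s) > 0, Xᵢ(s) > 0 and Yᵢ(s) > 0 for all i and all s ≥ s₀, and with 𝒮₂(s) < 0 for all s ≥ s₀. If at s = s₀ one has X₁ > Xᵢ for all i = 2,…,r and X₁ > (ε/2)𝓛², then for all s ≥ s₀: X₁(s) > Xᵢ(s) for all i = 2,…,r, X₁(s) > ∑ⱼ dⱼXⱼ(s)², and X₁(s) > (ε/2)𝓛(s)². -/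

import Mathlib

open Filter Topology

/-- `(𝓛, X₁,…,X_r, Y₁,…,Y_r)` solves the expanding Ricci soliton ODE system
`𝓛' = 𝓛(∑ⱼ dⱼXⱼ² − (ε/2)𝓛²)`,
`Xᵢ' = Xᵢ(∑ⱼ dⱼXⱼ² − (ε/2)𝓛² − 1) + μᵢYᵢ² + (ε/2)𝓛²`,
`Yᵢ' = Yᵢ(∑ⱼ dⱼXⱼ² − (ε/2)𝓛² − Xᵢ)` on the set `I`. -/
def IsSolitonSol (r : ℕ) (d : Fin r → ℕ) (μ : Fin r → ℝ) (ε : ℝ)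
    (L : ℝ → ℝ) (X Y : Fin r → ℝ → ℝ) (I : Set ℝ) : Prop :=
  (∀ s ∈ I, HasDerivAt L
      (L s * (∑ j, (d j : ℝ) * X j s ^ 2 - ε / 2 * L s ^ 2)) s) ∧
  (∀ i, ∀ s ∈ I, HasDerivAt (X i)
      (X i s * (∑ j, (d j : ℝ) * X j s ^ 2 - ε / 2 * L s ^ 2 - 1)
        + μ i * Y i s ^ 2 + ε / 2 * L s ^ 2) s) ∧
  (∀ i, ∀ s ∈ I, HasDerivAt (Y i)
      (Y i s * (∑ j, (d j : ℝ) * X j s ^ 2 - ε / 2 * L s ^ 2 - X i s)) s)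

/-!
The inequalities `X₁ > Xᵢ` and `X₁ > (ε/2)𝓛²` are propagated from `s₀` by the same principle: if
`f' ≥ a f` with `a` continuous, then `f` stays positive once it is positive. Write
`Q = ∑ⱼ dⱼXⱼ² − (ε/2)𝓛²` and `l = (ε/2)𝓛²`. For `i ≠ 1`,
`(X₁ - Xᵢ)' = (Q - 1)(X₁ - Xᵢ) + μ₁Y₁² - μᵢYᵢ²` with `μᵢ ≤ 0 ≤ μ₁`, which yields `Xᵢ < X₁`. Hence
`∑ⱼ dⱼXⱼ² ≤ X₁ ∑ⱼ dⱼXⱼ < X₁`, and this makes the second term nonnegative in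
`(X₁ - l)' = (Q - 1 - l)(X₁ - l) + l(X₁ - ∑ⱼ dⱼXⱼ²) + μ₁Y₁²`.
-/

theorem monotoneOn_mul_exp_neg {D : Set ℝ} (hD : Convex ℝ D) {f f' a A : ℝ → ℝ}
    (hA : ∀ s ∈ D, HasDerivWithinAt A (a s) D s) (hf : ∀ s ∈ D, HasDerivWithinAt f (f' s) D s)
    (hle : ∀ s ∈ D, a s * f s ≤ f' s) :
    MonotoneOn (fun s ↦ f s * Real.exp (-A s)) D := by
  have hderiv : ∀ s ∈ D, HasDerivWithinAt (fun s ↦ f s * Real.exp (-A s))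
      ((f' s - a s * f s) * Real.exp (-A s)) D s := fun s hs ↦
    ((hf s hs).mul (hA s hs).neg.exp).congr_deriv (by rw [Pi.neg_apply]; ring)
  refine monotoneOn_of_hasDerivWithinAt_nonneg hD (fun s hs ↦ (hderiv s hs).continuousWithinAt)
    (fun s hs ↦ (hderiv s (interior_subset hs)).mono interior_subset) fun s hs ↦ ?_
  exact mul_nonneg (sub_nonneg.2 (hle s (interior_subset hs))) (Real.exp_pos _).le

theorem exists_antideriv_of_continuousOn_Ici {E : Type*} [NormedAddCommGroup E]
    [NormedSpace ℝ E] [CompleteSpace E] {a : ℝ → E} {s₀ : ℝ} (ha : ContinuousOn a (Set.Ici s₀)) :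
    ∃ A : ℝ → E, ∀ s ∈ Set.Ici s₀, HasDerivWithinAt A (a s) (Set.Ici s₀) s := by
  have hext : Continuous fun t ↦ a (max s₀ t) :=
    ha.comp_continuous (by fun_prop) fun t ↦ le_max_left s₀ t
  refine ⟨fun s ↦ ∫ t in s₀..s, a (max s₀ t), fun s hs ↦ ?_⟩
  have hderiv := (hext.integral_hasStrictDerivAt s₀ s).hasDerivAt
  rw [max_eq_right hs] at hderiv
  exact hderiv.hasDerivWithinAt

theorem pos_of_mul_le_deriv {f f' a : ℝ → ℝ} {s₀ : ℝ} (ha : ContinuousOn a (Set.Ici s₀))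
    (hf : ∀ s ≥ s₀, HasDerivWithinAt f (f' s) (Set.Ici s₀) s) (hle : ∀ s ≥ s₀, a s * f s ≤ f' s)
    (h₀ : 0 < f s₀) {s : ℝ} (hs : s₀ ≤ s) : 0 < f s := by
  obtain ⟨A, hA⟩ := exists_antideriv_of_continuousOn_Ici ha
  have hmono : f s₀ * Real.exp (-A s₀) ≤ f s * Real.exp (-A s) :=
    monotoneOn_mul_exp_neg (convex_Ici s₀) hA hf hle Set.self_mem_Ici hs hs
  exact pos_of_mul_pos_left ((mul_pos h₀ (Real.exp_pos _)).trans_le hmono) (Real.exp_pos _).le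

theorem sum_mul_sq_le_mul_sum {ι R : Type*} [CommSemiring R] [PartialOrder R] [IsOrderedRing R]
    {t : Finset ι} {w x : ι → R} {M : R} (hw : ∀ i ∈ t, 0 ≤ w i) (hx : ∀ i ∈ t, 0 ≤ x i)
    (hM : ∀ i ∈ t, x i ≤ M) : ∑ i ∈ t, w i * x i ^ 2 ≤ M * ∑ i ∈ t, w i * x i := by
  rw [Finset.mul_sum]
  refine Finset.sum_le_sum fun i hi ↦ ?_
  calc w i * x i ^ 2 = x i * (w i * x i) := by ring
    _ ≤ M * (w i * x i) := mul_le_mul_of_nonneg_right (hM i hi) (mul_nonneg (hw i hi) (hx i hi))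

/-- The common growth rate `∑ⱼ dⱼXⱼ² − (ε/2)𝓛²` of the soliton system, which is the
logarithmic derivative of `𝓛` wherever `𝓛 ≠ 0`. -/
noncomputable def solitonRate {r : ℕ} (d : Fin r → ℕ) (ε : ℝ) (L : ℝ → ℝ) (X : Fin r → ℝ → ℝ)
    (s : ℝ) : ℝ :=
  ∑ j, (d j : ℝ) * X j s ^ 2 - ε / 2 * L s ^ 2

namespace IsSolitonSol

variable {r : ℕ} {d : Fin r → ℕ} {μ : Fin r → ℝ} {ε s₀ : ℝ} {L : ℝ → ℝ} {X Y : Fin r → ℝ → ℝ}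

theorem continuousOn_L {I : Set ℝ} (h : IsSolitonSol r d μ ε L X Y I) : ContinuousOn L I :=
  HasDerivAt.continuousOn h.1

theorem continuousOn_solitonRate {I : Set ℝ} (h : IsSolitonSol r d μ ε L X Y I) :
    ContinuousOn (solitonRate d ε L X) I := by
  have hX : ∀ j, ContinuousOn (X j) I := fun j ↦ HasDerivAt.continuousOn (h.2.1 j)
  exact (continuousOn_finsetSum _ fun j _ ↦ continuousOn_const.mul ((hX j).pow 2)).sub
    (continuousOn_const.mul (h.continuousOn_L.pow 2))

theorem X_pos (h : IsSolitonSol r d μ ε L X Y (Set.Ici s₀)) (hε : 0 ≤ ε) {i : Fin r}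
    (hμ : 0 ≤ μ i) (h₀ : 0 < X i s₀) {s : ℝ} (hs : s₀ ≤ s) : 0 < X i s := by
  have hderiv : ∀ t ≥ s₀, HasDerivAt (X i)
      ((solitonRate d ε L X t - 1) * X i t + (μ i * Y i t ^ 2 + ε / 2 * L t ^ 2)) t :=
    fun t ht ↦ (h.2.1 i t ht).congr_deriv (by rw [solitonRate]; ring)
  exact pos_of_mul_le_deriv (h.continuousOn_solitonRate.sub continuousOn_const)
    (fun t ht ↦ (hderiv t ht).hasDerivWithinAt)
    (fun t _ ↦ le_add_of_nonneg_right (by positivity)) h₀ hs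

theorem X_lt_X (h : IsSolitonSol r d μ ε L X Y (Set.Ici s₀)) {i j : Fin r} (hi : μ i ≤ 0)
    (hj : 0 ≤ μ j) (h₀ : X i s₀ < X j s₀) {s : ℝ} (hs : s₀ ≤ s) : X i s < X j s := by
  have hderiv : ∀ t ≥ s₀, HasDerivAt (fun t ↦ X j t - X i t)
      ((solitonRate d ε L X t - 1) * (X j t - X i t) + (μ j * Y j t ^ 2 - μ i * Y i t ^ 2)) t :=
    fun t ht ↦ ((h.2.1 j t ht).sub (h.2.1 i t ht)).congr_deriv (by rw [solitonRate]; ring)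
  refine sub_pos.1 (pos_of_mul_le_deriv (h.continuousOn_solitonRate.sub continuousOn_const)
    (fun t ht ↦ (hderiv t ht).hasDerivWithinAt) (fun t _ ↦ le_add_of_nonneg_right ?_)
    (sub_pos.2 h₀) hs)
  have hYi : μ i * Y i t ^ 2 ≤ 0 := mul_nonpos_of_nonpos_of_nonneg hi (sq_nonneg _)
  have hYj : 0 ≤ μ j * Y j t ^ 2 := mul_nonneg hj (sq_nonneg _)
  linarith

theorem L_sq_lt_X (h : IsSolitonSol r d μ ε L X Y (Set.Ici s₀)) (hε : 0 ≤ ε) {i : Fin r}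
    (hμ : 0 ≤ μ i) (hsum : ∀ s ≥ s₀, ∑ j, (d j : ℝ) * X j s ^ 2 ≤ X i s)
    (h₀ : ε / 2 * L s₀ ^ 2 < X i s₀) {s : ℝ} (hs : s₀ ≤ s) : ε / 2 * L s ^ 2 < X i s := by
  have hderiv : ∀ t ≥ s₀, HasDerivAt (fun t ↦ X i t - ε / 2 * L t ^ 2)
      ((solitonRate d ε L X t - 1 - ε / 2 * L t ^ 2) * (X i t - ε / 2 * L t ^ 2)
        + (ε / 2 * L t ^ 2 * (X i t - ∑ j, (d j : ℝ) * X j t ^ 2) + μ i * Y i t ^ 2)) t :=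
    fun t ht ↦ ((h.2.1 i t ht).sub (((h.1 t ht).pow 2).const_mul (ε / 2))).congr_deriv
      (by rw [solitonRate]; push_cast; ring)
  have hrate : ContinuousOn (fun t ↦ solitonRate d ε L X t - 1 - ε / 2 * L t ^ 2) (Set.Ici s₀) :=
    (h.continuousOn_solitonRate.sub continuousOn_const).sub
      (continuousOn_const.mul (h.continuousOn_L.pow 2))
  refine sub_pos.1 (pos_of_mul_le_deriv hrate
    (fun t ht ↦ (hderiv t ht).hasDerivWithinAt) (fun t ht ↦ le_add_of_nonneg_right ?_)
    (sub_pos.2 h₀) hs)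
  have hgap : 0 ≤ X i t - ∑ j, (d j : ℝ) * X j t ^ 2 := sub_nonneg.2 (hsum t ht)
  positivity

end IsSolitonSol

theorem stmt_10_general {r : ℕ} {d : Fin r → ℕ} {μ : Fin r → ℝ} {ε s₀ : ℝ} {L : ℝ → ℝ}
    {X Y : Fin r → ℝ → ℝ} (o : Fin r) (hμo : 0 ≤ μ o) (hμ : ∀ i ≠ o, μ i ≤ 0) (hε : 0 ≤ ε)
    (hsol : IsSolitonSol r d μ ε L X Y (Set.Ici s₀)) (hX : ∀ s ≥ s₀, ∀ i ≠ o, 0 ≤ X i s)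
    (hS₂ : ∀ s ≥ s₀, ∑ i, (d i : ℝ) * X i s - 1 < 0) (h₀X : ∀ i ≠ o, X i s₀ < X o s₀)
    (h₀L : ε / 2 * L s₀ ^ 2 < X o s₀) :
    ∀ s ≥ s₀, (∀ i ≠ o, X i s < X o s) ∧ (∑ j, (d j : ℝ) * X j s ^ 2 < X o s) ∧
      ε / 2 * L s ^ 2 < X o s := by
  have hlt : ∀ s ≥ s₀, ∀ i ≠ o, X i s < X o s := fun s hs i hi ↦
    hsol.X_lt_X (hμ i hi) hμo (h₀X i hi) hs
  have hpos : ∀ s ≥ s₀, 0 < X o s := fun s hs ↦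
    hsol.X_pos hε hμo (lt_of_le_of_lt (by positivity) h₀L) hs
  have hsum : ∀ s ≥ s₀, ∑ j, (d j : ℝ) * X j s ^ 2 < X o s := fun s hs ↦ by
    have hnonneg : ∀ j, 0 ≤ X j s := fun j ↦
      (eq_or_ne j o).elim (fun hj ↦ hj ▸ (hpos s hs).le) (hX s hs j)
    have hmax : ∀ j, X j s ≤ X o s := fun j ↦
      (eq_or_ne j o).elim (fun hj ↦ hj ▸ le_rfl) fun hj ↦ (hlt s hs j hj).le
    calc ∑ j, (d j : ℝ) * X j s ^ 2
        ≤ X o s * ∑ j, (d j : ℝ) * X j s :=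
          sum_mul_sq_le_mul_sum (fun j _ ↦ Nat.cast_nonneg (d j)) (fun j _ ↦ hnonneg j)
            fun j _ ↦ hmax j
      _ < X o s := mul_lt_of_lt_one_right (hpos s hs) (sub_neg.1 (hS₂ s hs))
  exact fun s hs ↦ ⟨hlt s hs, hsum s hs,
    hsol.L_sq_lt_X hε hμo (fun t ht ↦ (hsum t ht).le) h₀L hs⟩

/-- Proposition 7.3: along trajectories with positive coordinates and `𝒮₂ < 0`
(and with `μ₁ = d₁ − 1`, `μᵢ = 0` for `i ≥ 2`), the inequalities `X₁ > Xᵢ`,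
`X₁ > ∑ⱼ dⱼXⱼ²` and `X₁ > (ε/2)𝓛²` hold for all times.  Here the index `0 : Fin r`
plays the role of the index `1`. -/
theorem stmt_10 (r : ℕ) (hr : 2 ≤ r) (d : Fin r → ℕ) (hd : ∀ i, 0 < d i)
    (hd₁ : 2 ≤ d ⟨0, by omega⟩)
    (μ : Fin r → ℝ) (hμ₁ : μ ⟨0, by omega⟩ = (d ⟨0, by omega⟩ : ℝ) - 1)
    (hμ : ∀ i : Fin r, i ≠ ⟨0, by omega⟩ → μ i = 0)
    (ε : ℝ) (hε : 0 < ε) (s₀ : ℝ) (L : ℝ → ℝ) (X Y : Fin r → ℝ → ℝ)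
    (hsol : IsSolitonSol r d μ ε L X Y (Set.Ici s₀))
    (hpos : ∀ s ≥ s₀, 0 < L s ∧ ∀ i, 0 < X i s ∧ 0 < Y i s)
    (hS₂ : ∀ s ≥ s₀, ∑ i, (d i : ℝ) * X i s - 1 < 0)
    (h₀X : ∀ i : Fin r, i ≠ ⟨0, by omega⟩ → X i s₀ < X ⟨0, by omega⟩ s₀)
    (h₀L : ε / 2 * L s₀ ^ 2 < X ⟨0, by omega⟩ s₀) :
    ∀ s ≥ s₀,
      (∀ i : Fin r, i ≠ ⟨0, by omega⟩ → X i s < X ⟨0, by omega⟩ s) ∧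
      (∑ j, (d j : ℝ) * X j s ^ 2 < X ⟨0, by omega⟩ s) ∧
      ε / 2 * L s ^ 2 < X ⟨0, by omega⟩ s := by
  have hμ₁_nonneg : 0 ≤ μ ⟨0, by omega⟩ := hμ₁ ▸ sub_nonneg.2 (Nat.one_le_cast.2 (by omega))
  exact stmt_10_general _ hμ₁_nonneg (fun i hi ↦ (hμ i hi).le) hε.le hsol
    (fun s hs i _ ↦ ((hpos s hs).2 i).1.le) hS₂ h₀X h₀L
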